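/- (Theorem 1, joint perturbation mechanism) Let r ≥ 1, let 0 < ε_lr < 1, ε_e > 0, and 0 < δ < 1, and set σ = √2·√(2·ln(1.25/δ))/ε_lr. Let s, s' ∈ ℝ^r with √(Σ_{i=1}^r (s_i − s'_i)²) ≤ √2, and let E, E' ∈ ℝ with |E − E'| ≤ 1. Let μ be the product measure on ℝ^r × ℝ whose first factor is the product of the Gaussian measures N(s_i, σ²) and whose second factor is the Laplace measure Lap(E, 1/ε_e), and let ν be the analogous product built from s' and E'. Then for every measurable set W ⊆ ℝ^r × ℝ, μ(W) ≤ e^{ε_lr + ε_e}·ν(W) + δ; that is, the joint mechanism that perturbs the top-r singular values with Gaussian noise and the edge count with Laplace noise satisfies the (ε_lr + ε_e, δ) indistinguishability inequality. -/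

import Mathlib

open MeasureTheory ProbabilityTheory

/-- The Laplace measure `Lap(m, 1/ε)` on `ℝ`: the measure with density
`t ↦ (ε/2)·exp(−ε·|t − m|)` with respect to Lebesgue measure. -/
noncomputable def lapMeasure (m ε : ℝ) : Measure ℝ :=
  volume.withDensity fun t => ENNReal.ofReal ((ε / 2) * Real.exp (-(ε * |t - m|)))

/-!
For two Gaussian product measures with common variance `v` whose means are at Euclidean distance
`D`, the log-likelihood ratio is an affine function of the sample, and under the first measure its
law is `N(w/2, w)` with `w = D² / v`. Outside the event that this ratio exceeds `ε`, the first
measure is at most `exp ε` times the second, so `δ` only has to bound the tail of `N(w/2, w)` beyond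
`ε`. This tail is at most `(5/4) exp (-ε² / (2w))` when `ε ≤ 1`, which explains the constant `1.25`
in the calibration of `σ`. For the Laplace measures the likelihood ratio is bounded everywhere by
the triangle inequality. The two guarantees add up under products, because indistinguishability
extends from events to `[0, 1]`-valued functions by the layer cake formula.
-/

open Set
open scoped ENNReal NNReal

/-- `(ε, δ)`-indistinguishability of `μ` from `ν`, the one-sided inequality of differential privacy:
`μ S ≤ exp ε * ν S + δ` for every measurable `S`. The slack `δ` is an extended nonnegative real so
that no sign condition is needed when slacks are added. -/
def IsIndistinguishable {α : Type*} [MeasurableSpace α] (ε : ℝ) (δ : ℝ≥0∞) (μ ν : Measure α) :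
    Prop :=
  ∀ S : Set α, MeasurableSet S → μ S ≤ ENNReal.ofReal (Real.exp ε) * ν S + δ

namespace IsIndistinguishable

variable {α β : Type*} [MeasurableSpace α] [MeasurableSpace β] {ε : ℝ} {δ : ℝ≥0∞} {μ ν : Measure α}

theorem of_le_smul (h : μ ≤ ENNReal.ofReal (Real.exp ε) • ν) : IsIndistinguishable ε 0 μ ν :=
  fun S _ ↦ by simpa using h S

theorem of_one_le [IsProbabilityMeasure μ] (hδ : 1 ≤ δ) : IsIndistinguishable ε δ μ ν :=
  fun _ _ ↦ prob_le_one.trans (hδ.trans le_add_self)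

theorem refl (hε : 0 ≤ ε) (δ : ℝ≥0∞) (μ : Measure α) : IsIndistinguishable ε δ μ μ := by
  intro S _
  have h_one : 1 ≤ ENNReal.ofReal (Real.exp ε) :=
    ENNReal.one_le_ofReal.2 (Real.one_le_exp hε)
  exact (le_mul_of_one_le_left' h_one).trans le_self_add

theorem of_withDensity_exp {L : α → ℝ} (hL : Measurable L)
    (hμ : μ = ν.withDensity fun x ↦ ENNReal.ofReal (Real.exp (L x))) (hδ : μ {x | ε < L x} ≤ δ) :
    IsIndistinguishable ε δ μ ν := by
  intro S hS
  have hT : MeasurableSet {x | ε < L x} := measurableSet_lt measurable_const hL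
  have h_diff : μ (S \ {x | ε < L x}) ≤ ENNReal.ofReal (Real.exp ε) * ν S := by
    rw [hμ, withDensity_apply _ (hS.diff hT)]
    calc ∫⁻ x in S \ {x | ε < L x}, ENNReal.ofReal (Real.exp (L x)) ∂ν
        ≤ ∫⁻ _ in S \ {x | ε < L x}, ENNReal.ofReal (Real.exp ε) ∂ν :=
          setLIntegral_mono measurable_const fun x hx ↦
            ENNReal.ofReal_le_ofReal (Real.exp_le_exp.2 (not_lt.1 hx.2))
      _ = ENNReal.ofReal (Real.exp ε) * ν (S \ {x | ε < L x}) := setLIntegral_const _ _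
      _ ≤ ENNReal.ofReal (Real.exp ε) * ν S := by gcongr; exact sdiff_subset
  calc μ S ≤ μ (S \ {x | ε < L x}) + μ (S ∩ {x | ε < L x}) := (measure_sdiff_add_inter S hT).ge
    _ ≤ ENNReal.ofReal (Real.exp ε) * ν S + δ :=
      add_le_add h_diff ((measure_mono inter_subset_right).trans hδ)

theorem lintegral_le (h : IsIndistinguishable ε δ μ ν) {f : α → ℝ≥0∞} (hf : Measurable f)
    (hf_one : ∀ x, f x ≤ 1) :
    ∫⁻ x, f x ∂μ ≤ ENNReal.ofReal (Real.exp ε) * ∫⁻ x, f x ∂ν + δ := by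
  have layer_cake (ρ : Measure α) :
      ∫⁻ x, f x ∂ρ = ∫⁻ t in Ioi (0 : ℝ), ρ {x | t < (f x).toReal} := by
    rw [← lintegral_eq_lintegral_meas_lt ρ (.of_forall fun _ ↦ ENNReal.toReal_nonneg)
      hf.ennreal_toReal.aemeasurable]
    exact lintegral_congr fun x ↦
      (ENNReal.ofReal_toReal ((hf_one x).trans_lt ENNReal.one_lt_top).ne).symm
  have level_le (t : ℝ) : μ {x | t < (f x).toReal} ≤
      ENNReal.ofReal (Real.exp ε) * ν {x | t < (f x).toReal} + (Iio 1).indicator (fun _ ↦ δ) t := by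
    by_cases ht : t < 1
    · rw [indicator_of_mem (mem_Iio.2 ht)]
      exact h _ (measurableSet_lt measurable_const hf.ennreal_toReal)
    · have h_empty : {x | t < (f x).toReal} = ∅ := eq_empty_of_forall_notMem fun x hx ↦
        ht (lt_of_lt_of_le hx (ENNReal.toReal_mono ENNReal.one_ne_top (hf_one x)))
      simp [h_empty]
  rw [layer_cake μ, layer_cake ν]
  calc ∫⁻ t in Ioi (0 : ℝ), μ {x | t < (f x).toReal}
      ≤ ∫⁻ t in Ioi (0 : ℝ), (ENNReal.ofReal (Real.exp ε) * ν {x | t < (f x).toReal} +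
          (Iio 1).indicator (fun _ ↦ δ) t) := lintegral_mono level_le
    _ = ENNReal.ofReal (Real.exp ε) * (∫⁻ t in Ioi (0 : ℝ), ν {x | t < (f x).toReal}) + δ := by
      rw [lintegral_add_right _ (measurable_const.indicator measurableSet_Iio),
        lintegral_const_mul' _ _ ENNReal.ofReal_ne_top, lintegral_indicator_const measurableSet_Iio,
        Measure.restrict_apply measurableSet_Iio, inter_comm, Ioi_inter_Iio, Real.volume_Ioo]
      simp

theorem prod [IsProbabilityMeasure μ] (h : IsIndistinguishable ε δ μ ν) {ε' : ℝ} {δ' : ℝ≥0∞}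
    {μ' ν' : Measure β} [IsProbabilityMeasure μ'] [SFinite ν']
    (h' : IsIndistinguishable ε' δ' μ' ν') :
    IsIndistinguishable (ε + ε') (δ + δ') (μ.prod μ') (ν.prod ν') := by
  intro S hS
  have hν' : Measurable fun x ↦ ν' (Prod.mk x ⁻¹' S) := measurable_measure_prodMk_left hS
  -- Truncating at `1` is harmless for the probability `μ'` and makes `lintegral_le` applicable.
  let f : α → ℝ≥0∞ := fun x ↦ min 1 (ENNReal.ofReal (Real.exp ε') * ν' (Prod.mk x ⁻¹' S))
  have hf : Measurable f := measurable_const.min (hν'.const_mul _)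
  have slice_le (x : α) : μ' (Prod.mk x ⁻¹' S) ≤ f x + δ' := by
    rw [← min_add_add_right]
    exact le_min (prob_le_one.trans le_self_add) (h' _ (measurable_prodMk_left hS))
  rw [Measure.prod_apply hS, Measure.prod_apply hS]
  calc ∫⁻ x, μ' (Prod.mk x ⁻¹' S) ∂μ
      ≤ ∫⁻ x, (f x + δ') ∂μ := lintegral_mono slice_le
    _ = ∫⁻ x, f x ∂μ + δ' := by simp [lintegral_add_left hf]
    _ ≤ ENNReal.ofReal (Real.exp ε) * ∫⁻ x, f x ∂ν + δ + δ' := by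
      gcongr
      exact h.lintegral_le hf fun x ↦ min_le_left _ _
    _ ≤ ENNReal.ofReal (Real.exp ε) *
          ∫⁻ x, ENNReal.ofReal (Real.exp ε') * ν' (Prod.mk x ⁻¹' S) ∂ν + δ + δ' := by
      gcongr with x
      exact min_le_right _ _
    _ = ENNReal.ofReal (Real.exp (ε + ε')) * ∫⁻ x, ν' (Prod.mk x ⁻¹' S) ∂ν + (δ + δ') := by
      rw [lintegral_const_mul _ hν', ← mul_assoc, ← ENNReal.ofReal_mul (Real.exp_nonneg _),
        ← Real.exp_add, add_assoc]

end IsIndistinguishable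

section Laplace

theorem isProbabilityMeasure_lapMeasure (m : ℝ) {ε : ℝ} (hε : 0 < ε) :
    IsProbabilityMeasure (lapMeasure m ε) := by
  have h_integral : ∫ t : ℝ, ε / 2 * Real.exp (-(ε * |t|)) = 1 := by
    have h_half : ∫ t in Ioi (0 : ℝ), Real.exp (-(ε * t)) = ε⁻¹ := by
      simpa [neg_mul] using integral_exp_mul_Ioi (neg_neg_of_pos hε) 0
    rw [integral_const_mul, integral_comp_abs (f := fun t ↦ Real.exp (-(ε * t))), h_half]
    field_simp
  refine ⟨?_⟩
  rw [lapMeasure, withDensity_apply _ .univ, Measure.restrict_univ,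
    lintegral_sub_right_eq_self (fun t ↦ ENNReal.ofReal (ε / 2 * Real.exp (-(ε * |t|)))) m,
    ← ofReal_integral_eq_lintegral_ofReal (integrable_of_integral_eq_one h_integral)
      (.of_forall fun t ↦ by positivity), h_integral, ENNReal.ofReal_one]

theorem lapMeasure_le_smul {m m' ε Δ : ℝ} (hε : 0 ≤ ε) (hm : |m - m'| ≤ Δ) :
    lapMeasure m ε ≤ ENNReal.ofReal (Real.exp (ε * Δ)) • lapMeasure m' ε := by
  rw [lapMeasure, lapMeasure, ← withDensity_smul _ (by fun_prop)]
  refine withDensity_mono (.of_forall fun t ↦ ?_)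
  have h_triangle : |t - m'| ≤ |t - m| + Δ := (abs_sub_le t m m').trans (by gcongr)
  have h_exponent : -(ε * |t - m|) ≤ ε * Δ + -(ε * |t - m'|) := by
    linarith [mul_le_mul_of_nonneg_left h_triangle hε]
  calc ENNReal.ofReal (ε / 2 * Real.exp (-(ε * |t - m|)))
      ≤ ENNReal.ofReal (ε / 2 * Real.exp (ε * Δ + -(ε * |t - m'|))) := by gcongr
    _ = ENNReal.ofReal (Real.exp (ε * Δ)) *
          ENNReal.ofReal (ε / 2 * Real.exp (-(ε * |t - m'|))) := by
      rw [← ENNReal.ofReal_mul (Real.exp_nonneg _), Real.exp_add, mul_left_comm]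

end Laplace

section GaussianTail

theorem gaussianReal_Ioi_self_le_half (m : ℝ) (v : ℝ≥0) :
    gaussianReal m v (Ioi m) ≤ ENNReal.ofReal (1 / 2) := by
  have h_reflect : gaussianReal m v (Iio m) = gaussianReal m v (Ioi m) := by
    have h_map := gaussianReal_map_const_sub (μ := m) (v := v) (2 * m)
    rw [show 2 * m - m = m by ring] at h_map
    conv_rhs => rw [← h_map, Measure.map_apply (by fun_prop) measurableSet_Ioi]
    congr 1
    ext x
    simp only [mem_Iio, mem_preimage, mem_Ioi]
    constructor <;> intro <;> linarith
  have h_double : 2 * gaussianReal m v (Ioi m) ≤ 1 := by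
    rw [two_mul]
    nth_rw 1 [← h_reflect]
    rw [← measure_union (disjoint_left.2 fun x hx hx' ↦ lt_asymm (mem_Iio.1 hx) (mem_Ioi.1 hx'))
      measurableSet_Ioi]
    exact prob_le_one
  rw [one_div, ENNReal.ofReal_inv_of_pos two_pos, ENNReal.ofReal_ofNat, ENNReal.le_inv_iff_mul_le,
    mul_comm]
  exact h_double

theorem gaussianPDFReal_le (m : ℝ) (v : ℝ≥0) (x : ℝ) :
    gaussianPDFReal m v x ≤ (√(2 * Real.pi * v))⁻¹ := by
  rw [gaussianPDFReal]
  refine mul_le_of_le_one_right (by positivity) (Real.exp_le_one_iff.2 ?_)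
  rw [neg_div]
  exact neg_nonpos.2 (by positivity)

theorem gaussianReal_Ioi_le_half_add {m a : ℝ} {v : ℝ≥0} (hv : v ≠ 0) (ha : a ≤ m) :
    gaussianReal m v (Ioi a) ≤ ENNReal.ofReal ((√(2 * Real.pi * v))⁻¹ * (m - a) + 1 / 2) := by
  have h_Ioc : gaussianReal m v (Ioc a m) ≤ ENNReal.ofReal ((√(2 * Real.pi * v))⁻¹ * (m - a)) :=
    calc gaussianReal m v (Ioc a m)
        = ∫⁻ x in Ioc a m, gaussianPDF m v x := gaussianReal_apply m hv _
      _ ≤ ∫⁻ _ in Ioc a m, ENNReal.ofReal (√(2 * Real.pi * v))⁻¹ :=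
        lintegral_mono fun x ↦ ENNReal.ofReal_le_ofReal (gaussianPDFReal_le m v x)
      _ = ENNReal.ofReal ((√(2 * Real.pi * v))⁻¹ * (m - a)) := by
        rw [setLIntegral_const, Real.volume_Ioc, ENNReal.ofReal_mul (by positivity)]
  rw [← Ioc_union_Ioi_eq_Ioi ha,
    ENNReal.ofReal_add (mul_nonneg (by positivity) (sub_nonneg.2 ha)) (by norm_num)]
  exact (measure_union_le _ _).trans (add_le_add h_Ioc (gaussianReal_Ioi_self_le_half m v))

/-- The privacy loss of the Gaussian mechanism: the log-likelihood ratio at `x` of `N(m, v)` with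
respect to `N(m', v)`. -/
noncomputable def gaussianPrivacyLoss (m m' : ℝ) (v : ℝ≥0) (x : ℝ) : ℝ :=
  ((x - m') ^ 2 - (x - m) ^ 2) / (2 * v)

@[fun_prop]
theorem measurable_gaussianPrivacyLoss (m m' : ℝ) (v : ℝ≥0) :
    Measurable (gaussianPrivacyLoss m m' v) := by
  unfold gaussianPrivacyLoss
  fun_prop

theorem gaussianReal_eq_withDensity_exp_privacyLoss (m m' : ℝ) {v : ℝ≥0} (hv : v ≠ 0) :
    gaussianReal m v = (gaussianReal m' v).withDensity
      fun x ↦ ENNReal.ofReal (Real.exp (gaussianPrivacyLoss m m' v x)) := by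
  rw [gaussianReal_of_var_ne_zero _ hv, gaussianReal_of_var_ne_zero _ hv,
    ← withDensity_mul _ (measurable_gaussianPDF _ _) (by fun_prop)]
  congr 1
  ext x
  rw [Pi.mul_apply, gaussianPDF, gaussianPDF,
    ← ENNReal.ofReal_mul (gaussianPDFReal_nonneg _ _ _), gaussianPDFReal, gaussianPDFReal,
    mul_assoc (_ : ℝ)⁻¹, ← Real.exp_add, gaussianPrivacyLoss]
  congr 3
  ring

theorem gaussianReal_Ioi_le_half_exp {m a : ℝ} {v : ℝ≥0} (hv : v ≠ 0) (ha : m ≤ a) :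
    gaussianReal m v (Ioi a) ≤ ENNReal.ofReal (1 / 2 * Real.exp (-(a - m) ^ 2 / (2 * v))) := by
  have loss_le {x : ℝ} (hx : x ∈ Ioi a) :
      gaussianPrivacyLoss m a v x ≤ -(a - m) ^ 2 / (2 * v) := by
    unfold gaussianPrivacyLoss
    gcongr
    linarith [mul_nonneg (sub_nonneg.2 ha) (sub_nonneg.2 (mem_Ioi.1 hx).le)]
  -- Shift the mean to the threshold `a`, where the tail has mass at most one half.
  rw [gaussianReal_eq_withDensity_exp_privacyLoss m a hv, withDensity_apply _ measurableSet_Ioi]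
  calc ∫⁻ x in Ioi a, ENNReal.ofReal (Real.exp (gaussianPrivacyLoss m a v x)) ∂gaussianReal a v
      ≤ ∫⁻ _ in Ioi a, ENNReal.ofReal (Real.exp (-(a - m) ^ 2 / (2 * v))) ∂gaussianReal a v :=
        setLIntegral_mono measurable_const fun x hx ↦
          ENNReal.ofReal_le_ofReal (Real.exp_le_exp.2 (loss_le hx))
    _ = gaussianReal a v (Ioi a) * ENNReal.ofReal (Real.exp (-(a - m) ^ 2 / (2 * v))) := by
      rw [setLIntegral_const, mul_comm]
    _ ≤ ENNReal.ofReal (1 / 2) * ENNReal.ofReal (Real.exp (-(a - m) ^ 2 / (2 * v))) := by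
      gcongr
      exact gaussianReal_Ioi_self_le_half a v
    _ = ENNReal.ofReal (1 / 2 * Real.exp (-(a - m) ^ 2 / (2 * v))) :=
      (ENNReal.ofReal_mul (by norm_num)).symm

theorem half_mul_exp_le {ε w : ℝ} (hε : ε ≤ 1) (hw : 0 < w) :
    1 / 2 * Real.exp (-(ε - w / 2) ^ 2 / (2 * w)) ≤ 5 / 4 * Real.exp (-ε ^ 2 / (2 * w)) := by
  have h_exponent : -(ε - w / 2) ^ 2 / (2 * w) ≤ 1 / 2 + -ε ^ 2 / (2 * w) := by
    have h_expand : -(ε - w / 2) ^ 2 / (2 * w) = ε / 2 - w / 8 + -ε ^ 2 / (2 * w) := by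
      field_simp
      ring
    linarith
  have h_sqrt_e : Real.exp (1 / 2) ≤ 5 / 2 := by
    rw [Real.exp_half, Real.sqrt_le_left (by norm_num)]
    linarith [Real.exp_one_lt_three]
  calc 1 / 2 * Real.exp (-(ε - w / 2) ^ 2 / (2 * w))
      ≤ 1 / 2 * (Real.exp (1 / 2) * Real.exp (-ε ^ 2 / (2 * w))) := by
        rw [← Real.exp_add]
        gcongr
    _ ≤ 1 / 2 * (5 / 2 * Real.exp (-ε ^ 2 / (2 * w))) := by gcongr
    _ = 5 / 4 * Real.exp (-ε ^ 2 / (2 * w)) := by ring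

theorem inv_sqrt_mul_add_half_le {ε w : ℝ} (hε0 : 0 < ε) (hε1 : ε ≤ 1) (hw : 2 * ε ≤ w)
    (hw' : w ≤ 5 / 2 * ε ^ 2) :
    (√(2 * Real.pi * w))⁻¹ * (w / 2 - ε) + 1 / 2 ≤ 5 / 4 * Real.exp (-ε ^ 2 / (2 * w)) := by
  have hε : 4 / 5 ≤ ε := by nlinarith
  have h_inv_sqrt : (√(2 * Real.pi * w))⁻¹ ≤ 1 / 2 := by
    rw [one_div]
    refine inv_anti₀ two_pos (Real.le_sqrt_of_sq_le ?_)
    nlinarith [Real.pi_gt_three]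
  have h_exp : 3 / 4 ≤ Real.exp (-ε ^ 2 / (2 * w)) := by
    have h_exponent : -(1 / 4) ≤ -ε ^ 2 / (2 * w) := by
      rw [le_div_iff₀ (by linarith)]
      nlinarith
    linarith [Real.add_one_le_exp (-ε ^ 2 / (2 * w))]
  have h_gap : 0 ≤ w / 2 - ε ∧ w / 2 - ε ≤ 9 / 20 := ⟨by linarith, by nlinarith⟩
  nlinarith [mul_le_mul_of_nonneg_right h_inv_sqrt h_gap.1]

theorem gaussianReal_half_Ioi_le {ε : ℝ} {w : ℝ≥0} (hε0 : 0 < ε) (hε1 : ε ≤ 1) (hw : w ≠ 0) :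
    gaussianReal (w / 2) w (Ioi ε) ≤
      ENNReal.ofReal (5 / 4 * Real.exp (-ε ^ 2 / (2 * w))) := by
  have hw_pos : (0 : ℝ) < w := by positivity
  rcases le_total (w / 2 : ℝ) ε with h_right | h_left
  · exact (gaussianReal_Ioi_le_half_exp hw h_right).trans
      (ENNReal.ofReal_le_ofReal (half_mul_exp_le hε1 hw_pos))
  rcases le_total (w : ℝ) (5 / 2 * ε ^ 2) with h_small | h_large
  · exact (gaussianReal_Ioi_le_half_add hw h_left).trans
      (ENNReal.ofReal_le_ofReal (inv_sqrt_mul_add_half_le hε0 hε1 (by linarith) h_small))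
  · refine prob_le_one.trans (ENNReal.one_le_ofReal.2 ?_)
    have h_exponent : -(1 / 5) ≤ -ε ^ 2 / (2 * w) := by
      rw [le_div_iff₀ (by positivity)]
      linarith
    linarith [Real.add_one_le_exp (-ε ^ 2 / (2 * w))]

end GaussianTail

section GaussianProduct

variable {ι : Type*} [Fintype ι]

theorem pi_withDensity {α : ι → Type*} [∀ i, MeasurableSpace (α i)] (ν : ∀ i, Measure (α i))
    [∀ i, IsProbabilityMeasure (ν i)] {f : ∀ i, α i → ℝ≥0∞} (hf : ∀ i, Measurable (f i))
    [∀ i, SigmaFinite ((ν i).withDensity (f i))] :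
    Measure.pi (fun i ↦ (ν i).withDensity (f i)) =
      (Measure.pi ν).withDensity fun x ↦ ∏ i, f i (x i) := by
  refine Measure.pi_eq fun S hS ↦ ?_
  have hm (i : ι) : Measurable ((S i).indicator (f i)) := (hf i).indicator (hS i)
  have h_indicator (x : ∀ i, α i) : (univ.pi S).indicator (fun x ↦ ∏ i, f i (x i)) x =
      ∏ i, (S i).indicator (f i) (x i) := by
    by_cases hx : x ∈ univ.pi S
    · rw [indicator_of_mem hx]
      exact Finset.prod_congr rfl fun i _ ↦ (indicator_of_mem (hx i (mem_univ i)) _).symm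
    · obtain ⟨i, hi⟩ : ∃ i, x i ∉ S i := by simpa [mem_univ_pi] using hx
      rw [indicator_of_notMem hx,
        Finset.prod_eq_zero (Finset.mem_univ i) (indicator_of_notMem hi _)]
  calc (Measure.pi ν).withDensity (fun x ↦ ∏ i, f i (x i)) (univ.pi S)
      = ∫⁻ x, ∏ i, (S i).indicator (f i) (x i) ∂Measure.pi ν := by
        rw [withDensity_apply _ (.univ_pi hS), ← lintegral_indicator (.univ_pi hS)]
        exact lintegral_congr h_indicator
    _ = ∏ i, ∫⁻ x, (S i).indicator (f i) (x i) ∂Measure.pi ν :=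
        lintegral_prod_eq_prod_lintegral_of_indepFun Finset.univ _
          (iIndepFun_pi fun i ↦ (hm i).aemeasurable) fun i ↦ (hm i).comp (measurable_pi_apply i)
    _ = ∏ i, (ν i).withDensity (f i) (S i) := Finset.prod_congr rfl fun i _ ↦ by
        rw [(measurePreserving_eval ν i).lintegral_comp (hm i), lintegral_indicator (hS i),
          withDensity_apply _ (hS i)]

theorem pi_gaussianReal_map_sum (m : ι → ℝ) (v : ι → ℝ≥0) :
    (Measure.pi fun i ↦ gaussianReal (m i) (v i)).map (fun x ↦ ∑ i, x i) =
      gaussianReal (∑ i, m i) (∑ i, v i) := by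
  refine Measure.ext_of_charFun (funext fun t ↦ ?_)
  rw [charFun_map_sum_pi_eq_prod, Finset.prod_apply]
  simp only [charFun_gaussianReal, ← Complex.exp_sum, Finset.sum_sub_distrib, ← Finset.sum_div,
    ← Finset.sum_mul, ← Finset.mul_sum, Complex.ofReal_sum, NNReal.coe_sum]

theorem gaussianReal_map_privacyLoss (m m' : ℝ) {v : ℝ≥0} (hv : v ≠ 0) :
    (gaussianReal m v).map (gaussianPrivacyLoss m m' v) =
      gaussianReal ((m - m') ^ 2 / v / 2) (‖m - m'‖₊ ^ 2 / v) := by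
  have hv' : (v : ℝ) ≠ 0 := NNReal.coe_ne_zero.2 hv
  have h_affine : gaussianPrivacyLoss m m' v =
      (· + (m' ^ 2 - m ^ 2) / (2 * v)) ∘ ((m - m') / v * ·) := by
    ext x
    simp only [gaussianPrivacyLoss, Function.comp_apply]
    field_simp
    ring
  rw [h_affine, ← Measure.map_map (by fun_prop) (by fun_prop), gaussianReal_map_const_mul,
    gaussianReal_map_add_const]
  congr 1
  · field_simp
    ring
  · rw [← NNReal.coe_inj]
    push_cast
    rw [Real.norm_eq_abs, sq_abs]
    field_simp

theorem pi_gaussianReal_map_sum_privacyLoss {s s' : ι → ℝ} {v w : ℝ≥0} (hv : v ≠ 0)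
    (hw : (w : ℝ) = (∑ i, (s i - s' i) ^ 2) / v) :
    (Measure.pi fun i ↦ gaussianReal (s i) v).map
        (fun x ↦ ∑ i, gaussianPrivacyLoss (s i) (s' i) v (x i)) =
      gaussianReal (w / 2) w := by
  have h_comp : (fun x : ι → ℝ ↦ ∑ i, gaussianPrivacyLoss (s i) (s' i) v (x i)) =
      (fun y ↦ ∑ i, y i) ∘ fun x i ↦ gaussianPrivacyLoss (s i) (s' i) v (x i) := rfl
  rw [h_comp, ← Measure.map_map (by fun_prop) (by fun_prop),
    Measure.pi_map_pi fun i ↦ (measurable_gaussianPrivacyLoss _ _ _).aemeasurable]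
  simp only [gaussianReal_map_privacyLoss _ _ hv, pi_gaussianReal_map_sum]
  congr 1
  · rw [hw, Finset.sum_div, Finset.sum_div]
  · rw [← NNReal.coe_inj, hw]
    push_cast
    simp only [Real.norm_eq_abs, sq_abs, Finset.sum_div]

theorem pi_gaussianReal_eq_withDensity_exp_sum_privacyLoss (s s' : ι → ℝ) {v : ℝ≥0}
    (hv : v ≠ 0) :
    (Measure.pi fun i ↦ gaussianReal (s i) v) =
      (Measure.pi fun i ↦ gaussianReal (s' i) v).withDensity fun x ↦
        ENNReal.ofReal (Real.exp (∑ i, gaussianPrivacyLoss (s i) (s' i) v (x i))) := by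
  have h_density (i : ι) := gaussianReal_eq_withDensity_exp_privacyLoss (s i) (s' i) hv
  have (i : ι) : SigmaFinite ((gaussianReal (s' i) v).withDensity fun x ↦
      ENNReal.ofReal (Real.exp (gaussianPrivacyLoss (s i) (s' i) v x))) := by
    rw [← h_density i]
    infer_instance
  simp only [Real.exp_sum, ENNReal.ofReal_prod_of_nonneg fun _ _ ↦ Real.exp_nonneg _]
  rw [← pi_withDensity (fun i ↦ gaussianReal (s' i) v)
    (f := fun i x ↦ ENNReal.ofReal (Real.exp (gaussianPrivacyLoss (s i) (s' i) v x)))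
    fun i ↦ by fun_prop]
  exact congrArg Measure.pi (funext h_density)

theorem five_quarters_mul_exp_le {ε δ w : ℝ} (hδ : 0 < δ) (hw : 0 < w)
    (h : w * (2 * Real.log (1.25 / δ)) ≤ ε ^ 2) :
    5 / 4 * Real.exp (-ε ^ 2 / (2 * w)) ≤ δ := by
  have h_exponent : -ε ^ 2 / (2 * w) ≤ -Real.log (1.25 / δ) := by
    rw [div_le_iff₀ (by positivity)]
    linarith
  calc 5 / 4 * Real.exp (-ε ^ 2 / (2 * w))
      ≤ 5 / 4 * Real.exp (-Real.log (1.25 / δ)) := by gcongr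
    _ = δ := by
      rw [Real.exp_neg, Real.exp_log (by positivity)]
      field_simp
      norm_num

theorem isIndistinguishable_pi_gaussianReal {ε δ : ℝ} (hε0 : 0 < ε) (hε1 : ε ≤ 1) (hδ : 0 < δ)
    {s s' : ι → ℝ} {v : ℝ≥0}
    (h : (∑ i, (s i - s' i) ^ 2) * (2 * Real.log (1.25 / δ)) ≤ ε ^ 2 * v) :
    IsIndistinguishable ε (ENNReal.ofReal δ) (Measure.pi fun i ↦ gaussianReal (s i) v)
      (Measure.pi fun i ↦ gaussianReal (s' i) v) := by
  rcases eq_or_ne s s' with rfl | hs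
  · exact .refl hε0.le _ _
  have h_dist_pos : 0 < ∑ i, (s i - s' i) ^ 2 := by
    obtain ⟨i, hi⟩ := Function.ne_iff.1 hs
    exact Finset.sum_pos' (fun _ _ ↦ sq_nonneg _)
      ⟨i, Finset.mem_univ i, sq_pos_of_ne_zero (sub_ne_zero.2 hi)⟩
  rcases eq_or_ne v 0 with rfl | hv
  · -- Dirac measures at distinct points are only compatible with `h` when `δ ≥ 1.25`.
    have h_log : Real.log (1.25 / δ) ≤ 0 := by
      rw [NNReal.coe_zero, mul_zero] at h
      linarith [nonpos_of_mul_nonpos_right h h_dist_pos]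
    rw [Real.log_nonpos_iff (by positivity), div_le_one hδ] at h_log
    exact .of_one_le (ENNReal.one_le_ofReal.2 (by linarith))
  have hv_pos : (0 : ℝ) < v := by positivity
  obtain ⟨w, hw⟩ : ∃ w : ℝ≥0, (w : ℝ) = (∑ i, (s i - s' i) ^ 2) / v :=
    ⟨⟨_, by positivity⟩, rfl⟩
  have hw_pos : (0 : ℝ) < w := hw ▸ div_pos h_dist_pos hv_pos
  have h_tail : gaussianReal (w / 2) w (Ioi ε) ≤ ENNReal.ofReal δ := by
    refine (gaussianReal_half_Ioi_le hε0 hε1 (NNReal.coe_ne_zero.1 hw_pos.ne')).trans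
      (ENNReal.ofReal_le_ofReal (five_quarters_mul_exp_le hδ hw_pos ?_))
    rwa [hw, div_mul_eq_mul_div, div_le_iff₀ hv_pos]
  refine .of_withDensity_exp (by fun_prop)
    (pi_gaussianReal_eq_withDensity_exp_sum_privacyLoss s s' hv) ?_
  rwa [← pi_gaussianReal_map_sum_privacyLoss hv hw,
    Measure.map_apply (by fun_prop) measurableSet_Ioi] at h_tail

end GaussianProduct

theorem mul_le_sq_mul_sq_of_mul_sqrt_div_le {D Δ ε σ x : ℝ} (hε : 0 < ε) (hD : 0 ≤ D)
    (hDΔ : √D ≤ Δ) (hσ : Δ * √x / ε ≤ σ) : D * x ≤ ε ^ 2 * σ ^ 2 := by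
  have h_le : √D * √x ≤ ε * σ :=
    (mul_le_mul_of_nonneg_right hDΔ (Real.sqrt_nonneg x)).trans ((div_le_iff₀' hε).1 hσ)
  have hx : x ≤ √x ^ 2 := Real.sq_sqrt' ▸ le_max_left x 0
  calc D * x ≤ √D ^ 2 * √x ^ 2 := by
        rw [Real.sq_sqrt hD]
        gcongr
    _ = (√D * √x) ^ 2 := (mul_pow _ _ _).symm
    _ ≤ (ε * σ) ^ 2 := pow_le_pow_left₀ (by positivity) h_le 2
    _ = ε ^ 2 * σ ^ 2 := mul_pow _ _ _

theorem joint_perturbation_mechanism_general {ι : Type*} [Fintype ι] {ε ε' δ Δ Δ' σ : ℝ}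
    (hε0 : 0 < ε) (hε1 : ε ≤ 1) (hε' : 0 < ε') (hδ : 0 < δ)
    (hσ : Δ * √(2 * Real.log (1.25 / δ)) / ε ≤ σ) {s s' : ι → ℝ}
    (hs : √(∑ i, (s i - s' i) ^ 2) ≤ Δ) {E E' : ℝ} (hE : |E - E'| ≤ Δ') :
    IsIndistinguishable (ε + ε' * Δ') (ENNReal.ofReal δ)
      ((Measure.pi fun i ↦ gaussianReal (s i) (σ ^ 2).toNNReal).prod (lapMeasure E ε'))
      ((Measure.pi fun i ↦ gaussianReal (s' i) (σ ^ 2).toNNReal).prod (lapMeasure E' ε')) := by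
  have := isProbabilityMeasure_lapMeasure E hε'
  have := isProbabilityMeasure_lapMeasure E' hε'
  have h_gauss := isIndistinguishable_pi_gaussianReal (s := s) (s' := s') (v := (σ ^ 2).toNNReal)
    hε0 hε1 hδ <| by
      rw [Real.coe_toNNReal _ (sq_nonneg σ)]
      exact mul_le_sq_mul_sq_of_mul_sqrt_div_le hε0
        (Finset.sum_nonneg fun _ _ ↦ sq_nonneg _) hs hσ
  have h_lap := IsIndistinguishable.of_le_smul (lapMeasure_le_smul hε'.le hE)
  simpa only [add_zero] using h_gauss.prod h_lap

/-- **Theorem 1, joint perturbation mechanism.** The joint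
mechanism that perturbs the top-`r` singular values (with sensitivity `√2`)
with Gaussian noise of parameter `σ = √2·√(2·ln(1.25/δ))/ε_lr` and the edge
count (with sensitivity `1`) with Laplace noise of scale `1/ε_e` satisfies the
`(ε_lr + ε_e, δ)`-indistinguishability inequality. -/
theorem joint_perturbation_mechanism (r : ℕ) (hr : 1 ≤ r)
    (εlr εe δ : ℝ)
    (hεlr0 : 0 < εlr) (hεlr1 : εlr < 1) (hεe : 0 < εe) (hδ0 : 0 < δ) (hδ1 : δ < 1)
    (σ : ℝ) (hσ : σ = Real.sqrt 2 * Real.sqrt (2 * Real.log (1.25 / δ)) / εlr)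
    (s s' : Fin r → ℝ)
    (hss' : Real.sqrt (∑ i : Fin r, (s i - s' i) ^ 2) ≤ Real.sqrt 2)
    (E E' : ℝ) (hEE' : |E - E'| ≤ 1) :
    ∀ W : Set ((Fin r → ℝ) × ℝ), MeasurableSet W →
      ((Measure.pi fun i => gaussianReal (s i) (Real.toNNReal (σ ^ 2))).prod
          (lapMeasure E εe)) W
        ≤ ENNReal.ofReal (Real.exp (εlr + εe))
            * ((Measure.pi fun i => gaussianReal (s' i) (Real.toNNReal (σ ^ 2))).prod
                (lapMeasure E' εe)) W
          + ENNReal.ofReal δ := by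
  simpa only [mul_one, IsIndistinguishable] using
    joint_perturbation_mechanism_general hεlr0 hεlr1.le hεe hδ0 hσ.ge hss' hEE'
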